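/- If f ∈ F²_d is NC outer, then for every n ∈ ℕ and every strict row contraction Z = (Z_1,…,Z_d) of n×n complex matrices, the family α ↦ f(α) • Z^α is summable and the matrix f(Z) = ∑'_α f(α) • Z^α is invertible (IsUnit). -/

import Mathlib

noncomputable section

open scoped ComplexConjugate
open Matrix
open scoped ComplexOrder

abbrev Word (d : ℕ) := FreeMonoid (Fin d)

instance {d : ℕ} : DecidableEq (Word d) :=
  fun a b => decidable_of_iff (FreeMonoid.toList a = FreeMonoid.toList b)
    FreeMonoid.toList.injective.eq_iff

abbrev Fock (d : ℕ) := lp (fun _ : Word d => ℂ) 2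

abbrev fockBasis (d : ℕ) (α : Word d) : Fock d := lp.single 2 α (1 : ℂ)

/-- Product of the matrices `Z i` along the word `α`. -/
def wordProdM {d : ℕ} {n : Type} [Fintype n] [DecidableEq n]
    (Z : Fin d → Matrix n n ℂ) (α : Word d) : Matrix n n ℂ :=
  (α.toList.map Z).prod

/-- Evaluation of a power series with coefficients `c` at the matrix tuple `Z`. -/
def evalM {d : ℕ} {n : Type} [Fintype n] [DecidableEq n]
    (c : Word d → ℂ) (Z : Fin d → Matrix n n ℂ) : Matrix n n ℂ :=
  ∑' α : Word d, c α • wordProdM Z α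

def IsStrictRowContraction {d : ℕ} {n : Type} [Fintype n] [DecidableEq n]
    (Z : Fin d → Matrix n n ℂ) : Prop :=
  (1 - ∑ i, Z i * (Z i)ᴴ).PosDef

abbrev L2N := lp (fun _ : ℕ => ℂ) 2

def wordProdO {d : ℕ} (Z : Fin d → (L2N →L[ℂ] L2N)) (α : Word d) : L2N →L[ℂ] L2N :=
  (α.toList.map Z).prod

def evalO {d : ℕ} (c : Word d → ℂ) (Z : Fin d → (L2N →L[ℂ] L2N)) : L2N →L[ℂ] L2N :=
  ∑' α : Word d, c α • wordProdO Z α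

def IsStrictRowContractionO {d : ℕ} (Z : Fin d → (L2N →L[ℂ] L2N)) : Prop :=
  ∃ r : ℝ, r < 1 ∧
    ((r ^ 2 : ℂ) • (1 : L2N →L[ℂ] L2N)
      - ∑ i, Z i ∘L ContinuousLinearMap.adjoint (Z i)).IsPositive

/-- The singularity space `𝒮(f)`. -/
def SingSpace {d : ℕ} (f : Word d → ℂ) : Set (Fock d) :=
  {h | (∀ (n : ℕ) (Z : Fin d → Matrix (Fin n) (Fin n) ℂ) (y : Fin n → ℂ),
          IsStrictRowContraction Z → (evalM f Z)ᴴ *ᵥ y = 0 → (evalM (h ·) Z)ᴴ *ᵥ y = 0) ∧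
       (∀ (Z : Fin d → (L2N →L[ℂ] L2N)) (y : L2N),
          IsStrictRowContractionO Z → ContinuousLinearMap.adjoint (evalO f Z) y = 0 →
          ContinuousLinearMap.adjoint (evalO (h ·) Z) y = 0)}

def wordOp {d : ℕ} (R : Fin d → (Fock d →L[ℂ] Fock d)) (α : Word d) :
    Fock d →L[ℂ] Fock d :=
  (α.toList.map R).prod

/-- `f` is cyclic for the right creation operators. -/
def IsNCOuter {d : ℕ} (R : Fin d → (Fock d →L[ℂ] Fock d)) (f : Fock d) : Prop :=
  (Submodule.span ℂ {g : Fock d | ∃ α : Word d, g = wordOp R α f}).topologicalClosure = ⊤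

def IsNCInner {d : ℕ} (R : Fin d → (Fock d →L[ℂ] Fock d))
    (Θ : Fock d →L[ℂ] Fock d) : Prop :=
  (∀ x, ‖Θ x‖ = ‖x‖) ∧ ∀ i, Θ ∘L R i = R i ∘L Θ

/-!
For a strict row contraction `∑ Z_i Z_iᴴ ≤ r < 1`, induction on `k` gives
`∑_{|α| = k} Z^α (Z^α)ᴴ ≤ r ^ k`, so the entries of `α ↦ Z^α` are square summable and `g ↦ g(Z)` is
continuous on Fock space. It intertwines `R_i` with right multiplication by `Z_i`, hence maps the
orbit of `f` into the right ideal `f(Z) M_n`. This ideal is closed, being finite-dimensional, so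
cyclicity of `f` puts `1 = e_ε(Z)` into it, i.e. `f(Z)` has a right inverse.
-/

section RowContraction

open scoped MatrixOrder

lemma exists_nonneg_lt_one_le_algebraMap {A : Type*} [TopologicalSpace A] [Ring A] [StarRing A]
    [PartialOrder A] [StarOrderedRing A] [Algebra ℝ A] [NonnegSpectrumClass ℝ A]
    [ContinuousFunctionalCalculus ℝ A IsSelfAdjoint] [PosSMulMono ℝ A] {a : A}
    (ha : IsStrictlyPositive (1 - a)) : ∃ r : ℝ, 0 ≤ r ∧ r < 1 ∧ a ≤ algebraMap ℝ A r := by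
  cases subsingleton_or_nontrivial A with
  | inl _ => exact ⟨0, le_rfl, zero_lt_one, (Subsingleton.elim _ _).le⟩
  | inr _ =>
    obtain ⟨c, hc, hca⟩ := (CFC.exists_pos_algebraMap_le_iff ha.isSelfAdjoint).2
      fun x hx => ha.spectrum_pos hx
    refine ⟨max 0 (1 - c), le_max_left _ _, max_lt zero_lt_one (sub_lt_self 1 hc), ?_⟩
    calc a ≤ algebraMap ℝ A (1 - c) := by rw [map_sub, map_one]; exact le_sub_comm.mp hca
      _ ≤ algebraMap ℝ A (max 0 (1 - c)) := algebraMap_mono A (le_max_right _ _)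

lemma sum_prod_ofFn_mul_star_le_pow {A ι : Type*} [Ring A] [StarRing A] [PartialOrder A]
    [StarOrderedRing A] [Algebra ℝ A] [PosSMulMono ℝ A] [Fintype ι] {a : ι → A} {r : ℝ}
    (hr : 0 ≤ r) (ha : ∑ i, a i * star (a i) ≤ algebraMap ℝ A r) (k : ℕ) :
    ∑ v : Fin k → ι, (List.ofFn (a ∘ v)).prod * star (List.ofFn (a ∘ v)).prod ≤
      algebraMap ℝ A (r ^ k) := by
  induction k with
  | zero => simp
  | succ k ih =>
    calc ∑ v : Fin (k + 1) → ι, (List.ofFn (a ∘ v)).prod * star (List.ofFn (a ∘ v)).prod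
        = ∑ i, a i * (∑ v : Fin k → ι,
            (List.ofFn (a ∘ v)).prod * star (List.ofFn (a ∘ v)).prod) * star (a i) := by
          rw [← (Fin.consEquiv fun _ => ι).sum_comp, Fintype.sum_prod_type]
          simp [Fin.consEquiv, List.ofFn_succ, Finset.mul_sum, Finset.sum_mul, mul_assoc,
            Function.comp_def]
      _ ≤ ∑ i, a i * algebraMap ℝ A (r ^ k) * star (a i) :=
          Finset.sum_le_sum fun i _ => star_right_conjugate_le_conjugate ih (a i)
      _ = r ^ k • ∑ i, a i * star (a i) := by
          simp only [← Algebra.commutes, mul_assoc, ← Finset.mul_sum, Algebra.smul_def]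
      _ ≤ r ^ k • algebraMap ℝ A r := smul_le_smul_of_nonneg_left ha (pow_nonneg hr k)
      _ = algebraMap ℝ A (r ^ (k + 1)) := by rw [Algebra.smul_def, ← map_mul, pow_succ]

lemma summable_list_of_sum_ofFn_le {ι : Type*} [Fintype ι] {g : List ι → ℝ} {u : ℕ → ℝ}
    (hg : ∀ l, 0 ≤ g l) (hu : Summable u) (hgu : ∀ k, ∑ v : Fin k → ι, g (List.ofFn v) ≤ u k) :
    Summable g := by
  refine List.equivSigmaTuple.symm.summable_iff.mp
    ((summable_sigma_of_nonneg fun _ => hg _).mpr ⟨fun _ => Summable.of_finite, ?_⟩)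
  simp only [tsum_fintype]
  exact hu.of_nonneg_of_le (fun _ => Finset.sum_nonneg fun _ _ => hg _) hgu

lemma mul_star_apply_le_mul_conjTranspose_apply {A m n : Type*} [NonUnitalSemiring A] [StarRing A]
    [PartialOrder A] [StarOrderedRing A] [Fintype n] (M : Matrix m n A) (i : m) (j : n) :
    M i j * star (M i j) ≤ (M * Mᴴ) i i :=
  Finset.single_le_sum (f := fun k => M i k * star (M i k))
    (fun k _ => mul_star_self_nonneg (M i k)) (Finset.mem_univ j)

lemma diag_le_of_le {𝕜 n : Type*} [RCLike 𝕜] {A B : Matrix n n 𝕜} (h : A ≤ B) (i : n) :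
    A i i ≤ B i i :=
  sub_nonneg.mp (Matrix.le_iff.mp h).diag_nonneg

lemma sum_norm_sq_prod_ofFn_apply_le_pow {𝕜 ι n : Type*} [RCLike 𝕜] [Fintype ι] [Fintype n]
    [DecidableEq n] {Z : ι → Matrix n n 𝕜} {r : ℝ} (hr : 0 ≤ r)
    (hZ : ∑ i, Z i * (Z i)ᴴ ≤ algebraMap ℝ (Matrix n n 𝕜) r) (k : ℕ) (i j : n) :
    ∑ v : Fin k → ι, ‖(List.ofFn (Z ∘ v)).prod i j‖ ^ 2 ≤ r ^ k := by
  have hbound : ∑ v : Fin k → ι, (‖(List.ofFn (Z ∘ v)).prod i j‖ : 𝕜) ^ 2 ≤ (r : 𝕜) ^ k :=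
    calc ∑ v : Fin k → ι, (‖(List.ofFn (Z ∘ v)).prod i j‖ : 𝕜) ^ 2
        ≤ ∑ v : Fin k → ι, ((List.ofFn (Z ∘ v)).prod * (List.ofFn (Z ∘ v)).prodᴴ) i i := by
          refine Finset.sum_le_sum fun v _ => ?_
          rw [← RCLike.mul_conj]
          exact mul_star_apply_le_mul_conjTranspose_apply _ i j
      _ = (∑ v : Fin k → ι, (List.ofFn (Z ∘ v)).prod * (List.ofFn (Z ∘ v)).prodᴴ) i i :=
          (Matrix.sum_apply i i _ _).symm
      _ ≤ (algebraMap ℝ (Matrix n n 𝕜) (r ^ k)) i i :=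
          diag_le_of_le (sum_prod_ofFn_mul_star_le_pow hr hZ k) i
      _ = (r : 𝕜) ^ k := by simp [Matrix.algebraMap_matrix_apply]
  exact_mod_cast hbound

lemma IsStrictRowContraction.memℓp_wordProdM {d : ℕ} {n : Type} [Fintype n] [DecidableEq n]
    {Z : Fin d → Matrix n n ℂ} (hZ : IsStrictRowContraction Z) (i j : n) :
    Memℓp (fun α : Word d => wordProdM Z α i j) 2 := by
  obtain ⟨r, hr, hr1, hsum⟩ := exists_nonneg_lt_one_le_algebraMap
    (Matrix.PosDef.isStrictlyPositive hZ)
  have hword (k : ℕ) (v : Fin k → Fin d) :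
      wordProdM Z (FreeMonoid.ofList (List.ofFn v)) = (List.ofFn (Z ∘ v)).prod := by
    rw [wordProdM, FreeMonoid.toList_ofList, List.map_ofFn]
  have hbound (k : ℕ) :
      ∑ v : Fin k → Fin d, ‖wordProdM Z (FreeMonoid.ofList (List.ofFn v)) i j‖ ^ 2 ≤ r ^ k := by
    simpa only [hword] using sum_norm_sq_prod_ofFn_apply_le_pow hr hsum k i j
  refine memℓp_gen ?_
  simp only [ENNReal.toReal_ofNat, Real.rpow_two]
  exact summable_list_of_sum_ofFn_le (ι := Fin d) (fun _ => sq_nonneg _)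
    (summable_geometric_of_lt_one hr hr1) hbound

end RowContraction

section Evaluation

variable {d : ℕ} {n : Type} [Fintype n] [DecidableEq n]

lemma wordProdM_eq_lift (Z : Fin d → Matrix n n ℂ) : wordProdM Z = FreeMonoid.lift Z := by
  ext1 α
  exact (FreeMonoid.lift_apply Z α).symm

variable {Z : Fin d → Matrix n n ℂ}

/-- The NC Szegő kernel at `Z`, in coordinates: the vector of Fock space representing the
functional `g ↦ g(Z) i j`. -/
def szegoKernel (hZ : ∀ i j, Memℓp (fun α : Word d => wordProdM Z α i j) 2) (i j : n) : Fock d :=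
  star ⟨fun α => wordProdM Z α i j, hZ i j⟩

/-- Evaluation `g ↦ g(Z)` as a continuous linear map on Fock space. Matrices carry the product
topology, so that no choice of a matrix norm is involved. -/
def evalCLM (hZ : ∀ i j, Memℓp (fun α : Word d => wordProdM Z α i j) 2) :
    Fock d →L[ℂ] Matrix n n ℂ :=
  ContinuousLinearMap.pi fun i => ContinuousLinearMap.pi fun j => innerSL ℂ (szegoKernel hZ i j)

variable (hZ : ∀ i j, Memℓp (fun α : Word d => wordProdM Z α i j) 2)

lemma hasSum_evalCLM (g : Fock d) :
    HasSum (fun α : Word d => g α • wordProdM Z α) (evalCLM hZ g) := by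
  refine Pi.hasSum.mpr fun i => Pi.hasSum.mpr fun j => ?_
  have hterm (α : Word d) :
      (g α • wordProdM Z α) i j = inner ℂ (szegoKernel hZ i j α) (g α) := by
    simp [szegoKernel]
  simp only [hterm]
  exact lp.hasSum_inner (szegoKernel hZ i j) g

lemma evalCLM_apply (g : Fock d) : evalCLM hZ g = evalM (g ·) Z :=
  (hasSum_evalCLM hZ g).tsum_eq.symm

lemma evalCLM_fockBasis (α : Word d) : evalCLM hZ (fockBasis d α) = wordProdM Z α := by
  refine (hasSum_evalCLM hZ _).unique ?_
  convert hasSum_single α fun β hβ => ?_ using 1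
  · simp
  · simp [hβ]

lemma evalCLM_map_eq_mul_wordProdM {S : Fock d →L[ℂ] Fock d} {β : Word d}
    (hS : ∀ α, S (fockBasis d α) = fockBasis d (α * β)) (g : Fock d) :
    evalCLM hZ (S g) = evalCLM hZ g * wordProdM Z β := by
  have hcomp : evalCLM hZ ∘L S =
      (LinearMap.mulRight ℂ (wordProdM Z β)).toContinuousLinearMap ∘L evalCLM hZ := by
    refine lp.ext_continuousLinearMap ENNReal.ofNat_ne_top fun α => ?_
    ext1
    change evalCLM hZ (S (fockBasis d α)) = evalCLM hZ (fockBasis d α) * wordProdM Z β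
    simp only [hS, evalCLM_fockBasis, wordProdM_eq_lift, map_mul]
  exact DFunLike.congr_fun hcomp g

end Evaluation

section Outer

variable {d : ℕ} {R : Fin d → (Fock d →L[ℂ] Fock d)} {f : Fock d}

lemma wordOp_fockBasis
    (hR : ∀ (i : Fin d) (α : Word d), R i (fockBasis d α) = fockBasis d (α * FreeMonoid.of i))
    (α β : Word d) : wordOp R α (fockBasis d β) = fockBasis d (β * α.reverse) := by
  induction α using FreeMonoid.inductionOn' with
  | one => exact congrArg (fockBasis d) (mul_one β).symm
  | of_mul i α ih =>
    calc wordOp R (FreeMonoid.of i * α) (fockBasis d β) = R i (wordOp R α (fockBasis d β)) := by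
          simp [wordOp]
      _ = fockBasis d (β * (FreeMonoid.of i * α).reverse) := by
          rw [ih, hR, FreeMonoid.reverse_mul, FreeMonoid.reverse_of, mul_assoc]

lemma IsNCOuter.mem_of_isClosed (hf : IsNCOuter R f) {V : Submodule ℂ (Fock d)}
    (hV : IsClosed (V : Set (Fock d))) (horbit : ∀ α, wordOp R α f ∈ V) (g : Fock d) : g ∈ V := by
  have hle : Submodule.span ℂ {g | ∃ α, g = wordOp R α f} ≤ V :=
    Submodule.span_le.mpr (by rintro _ ⟨α, rfl⟩; exact horbit α)
  exact Submodule.topologicalClosure_minimal _ hle hV (hf.symm ▸ Submodule.mem_top)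

end Outer

theorem ncOuter_pointwise_invertible_general {d : ℕ} {n : Type} [Fintype n] [DecidableEq n]
    (R : Fin d → (Fock d →L[ℂ] Fock d))
    (hR : ∀ (i : Fin d) (α : Word d), R i (fockBasis d α) = fockBasis d (α * FreeMonoid.of i))
    (f : Fock d) (hf : IsNCOuter R f) (Z : Fin d → Matrix n n ℂ)
    (hZ : ∀ i j, Memℓp (fun α : Word d => wordProdM Z α i j) 2) :
    (Summable fun α : Word d => f α • wordProdM Z α) ∧ IsUnit (evalM (f ·) Z) := by
  refine ⟨(hasSum_evalCLM hZ f).summable, ?_⟩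
  let I : Submodule ℂ (Matrix n n ℂ) := LinearMap.range (LinearMap.mulLeft ℂ (evalM (f ·) Z))
  have hclosed : IsClosed (I.comap (evalCLM hZ).toLinearMap : Set (Fock d)) :=
    I.closed_of_finiteDimensional.preimage (evalCLM hZ).continuous
  have horbit (α : Word d) : evalCLM hZ (wordOp R α f) ∈ I :=
    ⟨wordProdM Z α.reverse, by
      rw [evalCLM_map_eq_mul_wordProdM hZ (wordOp_fockBasis hR α), evalCLM_apply,
        LinearMap.mulLeft_apply]⟩
  have hone : (1 : Matrix n n ℂ) ∈ I := by
    have hvacuum : evalCLM hZ (fockBasis d 1) ∈ I := hf.mem_of_isClosed hclosed horbit _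
    rwa [evalCLM_fockBasis, wordProdM_eq_lift, map_one] at hvacuum
  obtain ⟨A, hA⟩ := hone
  exact IsUnit.of_mul_eq_one A hA

/-- **NC outer functions are pointwise invertible.**
If `f ∈ F²_d` is NC outer then for every strict row contraction `Z` of `n×n`
matrices the series defining `f(Z)` is summable and `f(Z)` is invertible. -/
theorem ncOuter_pointwise_invertible {d : ℕ} (hd : 1 ≤ d)
    (R : Fin d → (Fock d →L[ℂ] Fock d))
    (hR : ∀ (i : Fin d) (α : Word d), R i (fockBasis d α) = fockBasis d (α * FreeMonoid.of i))
    (f : Fock d) (hf : IsNCOuter R f) :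
    ∀ (n : ℕ) (Z : Fin d → Matrix (Fin n) (Fin n) ℂ), IsStrictRowContraction Z →
      (Summable fun α : Word d => f α • wordProdM Z α) ∧ IsUnit (evalM (f ·) Z) :=
  fun _ Z hZ => ncOuter_pointwise_invertible_general R hR f hf Z hZ.memℓp_wordProdM
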